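/- Let R be a nontrivial commutative ring and let G be a subgroup of UT₃(R) containing a₁ and a₂. Let Ĝ be the subgroup of UT₃(R) generated by G together with all matrices in UT₃(R) whose (1,2)- and (2,3)-entries are 0. Then Ĝ satisfies τ if and only if G satisfies τ, where a subgroup K ≤ UT₃(R) containing a₁, a₂ satisfies τ means: for all x₁, x₂ ∈ K with [x₂,x₁]=1, [a₂,x₂]=1 and [x₁,a₁]=1, either [x₂,a₁]=1 or [a₂,x₁]=1. -/

import Mathlib

open Matrix

/-- A 3×3 matrix is *upper unitriangular* if all diagonal entries are `1`
and all entries below the diagonal are `0`. -/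
def IsUnitriangular {R : Type*} [CommRing R] (M : Matrix (Fin 3) (Fin 3) R) : Prop :=
  (∀ i, M i i = 1) ∧ ∀ i j : Fin 3, j < i → M i j = 0

/-- The upper unitriangular matrix with above-diagonal entries `a b c`, as a unit. -/
def ut {R : Type*} [CommRing R] (a b c : R) : (Matrix (Fin 3) (Fin 3) R)ˣ where
  val := !![1, a, b; 0, 1, c; 0, 0, 1]
  inv := !![1, -a, a * c - b; 0, 1, -c; 0, 0, 1]
  val_inv := by
    ext i j
    fin_cases i <;> fin_cases j <;>
      simp [Matrix.mul_apply, Fin.sum_univ_three, Matrix.one_apply, Matrix.vecHead, Matrix.vecTail] <;> ring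
  inv_val := by
    ext i j
    fin_cases i <;> fin_cases j <;>
      simp [Matrix.mul_apply, Fin.sum_univ_three, Matrix.one_apply, Matrix.vecHead, Matrix.vecTail] <;> ring

lemma ut_eq_iff {R : Type*} [CommRing R] (g : (Matrix (Fin 3) (Fin 3) R)ˣ) :
    IsUnitriangular (g : Matrix (Fin 3) (Fin 3) R) ↔
      ∃ a b c : R, g = ut a b c := by
  constructor
  · rintro ⟨h1, h2⟩
    refine ⟨(g : Matrix (Fin 3) (Fin 3) R) 0 1, (g : Matrix (Fin 3) (Fin 3) R) 0 2,
      (g : Matrix (Fin 3) (Fin 3) R) 1 2, Units.ext ?_⟩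
    ext i j
    fin_cases i <;> fin_cases j <;>
      simp [ut, Matrix.vecHead, Matrix.vecTail, h1, h2 1 0 (by decide), h2 2 0 (by decide), h2 2 1 (by decide)]
  · rintro ⟨a, b, c, rfl⟩
    constructor
    · intro i; fin_cases i <;> simp [ut]
    · intro i j hij
      fin_cases i <;> fin_cases j <;> simp_all [ut, Matrix.vecHead, Matrix.vecTail]

/-- `UT₃(R)`: the group of 3×3 upper unitriangular matrices over `R`, realized as the
subgroup of units of the matrix ring whose underlying matrices are upper unitriangular. -/
def UT3 (R : Type*) [CommRing R] : Subgroup (Matrix (Fin 3) (Fin 3) R)ˣ where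
  carrier := {g | IsUnitriangular (g : Matrix (Fin 3) (Fin 3) R)}
  one_mem' := by
    constructor
    · intro i; simp
    · intro i j hij; simp [Matrix.one_apply, hij.ne']
  mul_mem' := by
    intro a b ha hb
    rw [Set.mem_setOf_eq, ut_eq_iff] at *
    obtain ⟨a1, a2, a3, rfl⟩ := ha
    obtain ⟨b1, b2, b3, rfl⟩ := hb
    refine ⟨a1 + b1, a2 + b2 + a1 * b3, a3 + b3, Units.ext ?_⟩
    ext i j
    fin_cases i <;> fin_cases j <;>
      simp [ut, Matrix.mul_apply, Fin.sum_univ_three, Matrix.vecHead, Matrix.vecTail] <;> ring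
  inv_mem' := by
    intro a ha
    rw [Set.mem_setOf_eq, ut_eq_iff] at *
    obtain ⟨a1, a2, a3, rfl⟩ := ha
    refine ⟨-a1, a1 * a3 - a2, -a3, Units.ext ?_⟩
    rfl

/-- The generator `a₁` of the Heisenberg group: `(2,3)`-entry `1`, other
above-diagonal entries `0`. -/
def genA1 (R : Type*) [CommRing R] : (Matrix (Fin 3) (Fin 3) R)ˣ := ut 0 0 1

/-- The generator `a₂` of the Heisenberg group: `(1,2)`-entry `1`, other
above-diagonal entries `0`. -/
def genA2 (R : Type*) [CommRing R] : (Matrix (Fin 3) (Fin 3) R)ˣ := ut 1 0 0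

lemma genA1_mem (R : Type*) [CommRing R] : genA1 R ∈ UT3 R :=
  (ut_eq_iff _).mpr ⟨0, 0, 1, rfl⟩

lemma genA2_mem (R : Type*) [CommRing R] : genA2 R ∈ UT3 R :=
  (ut_eq_iff _).mpr ⟨1, 0, 0, rfl⟩

/-- The sentence `τ`: for all `x₁ x₂` in `G` with `[x₂,x₁] = 1`, `[a₂,x₂] = 1` and
`[x₁,a₁] = 1`, either `[x₂,a₁] = 1` or `[a₂,x₁] = 1` (commutators `[y,x] = y⁻¹x⁻¹yx`). -/
def SatisfiesTau (R : Type*) [CommRing R] (G : Subgroup (Matrix (Fin 3) (Fin 3) R)ˣ) : Prop :=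
  ∀ x₁ ∈ G, ∀ x₂ ∈ G,
    x₂⁻¹ * x₁⁻¹ * x₂ * x₁ = 1 →
    (genA2 R)⁻¹ * x₂⁻¹ * genA2 R * x₂ = 1 →
    x₁⁻¹ * (genA1 R)⁻¹ * x₁ * genA1 R = 1 →
    (x₂⁻¹ * (genA1 R)⁻¹ * x₂ * genA1 R = 1 ∨ (genA2 R)⁻¹ * x₁⁻¹ * genA2 R * x₁ = 1)

/-!
A commutator equals `1` exactly when its two arguments commute, so `τ` is a statement about which
elements commute. If the elements of `S` are central in a subgroup `K` containing `G`, `a₁` and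
`a₂`, then every element of `⟨G, S⟩` is some `g ∈ G` times an element central in `K`, and
discarding this central factor affects none of the commutation relations in `τ`.
The added matrices are central in `K = UT₃(R)`.
-/

section Group

variable {H : Type*} [Group H] {x y z : H}

lemma inv_mul_inv_mul_mul_eq_one_iff_commute : y⁻¹ * x⁻¹ * y * x = 1 ↔ Commute y x := by
  simpa only [commutatorElement_def, inv_inv, Commute.inv_inv_iff] using
    commutatorElement_eq_one_iff_commute (g₁ := y⁻¹) (g₂ := x⁻¹)

lemma commute_mul_right_iff_of_commute (hz : Commute x z) :
    Commute x (y * z) ↔ Commute x y :=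
  ⟨fun h ↦ by simpa only [mul_inv_cancel_right] using h.mul_right hz.inv_right,
    fun h ↦ h.mul_right hz⟩

lemma commute_mul_left_iff_of_commute (hz : Commute z x) :
    Commute (y * z) x ↔ Commute y x := by
  rw [Commute.symm_iff, commute_mul_right_iff_of_commute hz.symm, Commute.symm_iff]

lemma exists_mul_eq_of_mem_closure_union {G : Subgroup H} {S : Set H}
    (hS : S ⊆ Subgroup.centralizer (G : Set H)) (hx : x ∈ Subgroup.closure (↑G ∪ S)) :
    ∃ g ∈ G, ∃ z ∈ Subgroup.closure S, g * z = x := by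
  have hG : G ≤ Subgroup.normalizer (Subgroup.closure S) :=
    (Subgroup.le_centralizer_iff.1 ((Subgroup.closure_le _).2 hS)).trans
      (Subgroup.centralizer_le_normalizer _)
  rwa [Subgroup.closure_union, Subgroup.closure_eq, ← SetLike.mem_coe,
    Subgroup.coe_mul_of_left_le_normalizer_right _ _ hG, Set.mem_mul] at hx

end Group

section Unitriangular

variable {R : Type*} [CommRing R]

lemma satisfiesTau_iff_commute {G : Subgroup (Matrix (Fin 3) (Fin 3) R)ˣ} :
    SatisfiesTau R G ↔ ∀ x₁ ∈ G, ∀ x₂ ∈ G,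
      Commute x₂ x₁ → Commute (genA2 R) x₂ → Commute x₁ (genA1 R) →
        Commute x₂ (genA1 R) ∨ Commute (genA2 R) x₁ := by
  simp only [SatisfiesTau, inv_mul_inv_mul_mul_eq_one_iff_commute]

lemma commute_ut_iff {a b c a' b' c' : R} :
    Commute (ut a b c) (ut a' b' c') ↔ a * c' = a' * c := by
  simp [ut, commute_iff_eq, ← Units.val_inj, add_comm, add_left_comm b']

lemma mem_centralizer_UT3_of_apply_eq_zero {u : (Matrix (Fin 3) (Fin 3) R)ˣ} (hu : u ∈ UT3 R)
    (h01 : (u : Matrix (Fin 3) (Fin 3) R) 0 1 = 0)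
    (h12 : (u : Matrix (Fin 3) (Fin 3) R) 1 2 = 0) :
    u ∈ Subgroup.centralizer (UT3 R : Set (Matrix (Fin 3) (Fin 3) R)ˣ) := by
  obtain ⟨a, b, c, rfl⟩ := (ut_eq_iff u).1 hu
  obtain rfl : a = 0 := by simpa [ut] using h01
  obtain rfl : c = 0 := by simpa [ut] using h12
  intro v hv
  obtain ⟨a', b', c', rfl⟩ := (ut_eq_iff v).1 hv
  exact commute_ut_iff.2 (by rw [mul_zero, zero_mul])

theorem satisfiesTau_extend_central_general {G K : Subgroup (Matrix (Fin 3) (Fin 3) R)ˣ}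
    (hG : G ≤ K) (h1 : genA1 R ∈ K) (h2 : genA2 R ∈ K) {S : Set (Matrix (Fin 3) (Fin 3) R)ˣ}
    (hSK : S ⊆ K) (hS : S ⊆ Subgroup.centralizer (K : Set (Matrix (Fin 3) (Fin 3) R)ˣ)) :
    SatisfiesTau R (Subgroup.closure (↑G ∪ S)) ↔ SatisfiesTau R G := by
  simp only [satisfiesTau_iff_commute]
  constructor
  · intro h x₁ hx₁ x₂ hx₂
    exact h x₁ (Subgroup.subset_closure (.inl hx₁)) x₂ (Subgroup.subset_closure (.inl hx₂))
  · intro h x₁ hx₁ x₂ hx₂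
    have hSG := hS.trans (Subgroup.centralizer_le hG)
    obtain ⟨g₁, hg₁, z₁, hz₁, rfl⟩ := exists_mul_eq_of_mem_closure_union hSG hx₁
    obtain ⟨g₂, hg₂, z₂, hz₂, rfl⟩ := exists_mul_eq_of_mem_closure_union hSG hx₂
    have commute_central {k z : (Matrix (Fin 3) (Fin 3) R)ˣ} (hk : k ∈ K)
        (hz : z ∈ Subgroup.closure S) : Commute k z := (Subgroup.closure_le _).2 hS hz k hk
    have hgz : g₂ * z₂ ∈ K := K.mul_mem (hG hg₂) ((Subgroup.closure_le K).2 hSK hz₂)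
    rw [commute_mul_right_iff_of_commute (commute_central hgz hz₁),
      commute_mul_left_iff_of_commute (commute_central (hG hg₁) hz₂).symm,
      commute_mul_right_iff_of_commute (commute_central h2 hz₂),
      commute_mul_left_iff_of_commute (commute_central h1 hz₁).symm,
      commute_mul_left_iff_of_commute (commute_central h1 hz₂).symm,
      commute_mul_right_iff_of_commute (commute_central h2 hz₁)]
    exact h g₁ hg₁ g₂ hg₂

end Unitriangular

/-- Let `Ĝ` be generated by `G` together with all matrices in `UT₃(R)`
whose `(1,2)`- and `(2,3)`-entries vanish. Then `Ĝ` satisfies `τ` iff `G` does. -/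
theorem satisfiesTau_extend_central (R : Type*) [CommRing R] [Nontrivial R]
    (G : Subgroup (Matrix (Fin 3) (Fin 3) R)ˣ) (hG : G ≤ UT3 R)
    (h1 : genA1 R ∈ G) (h2 : genA2 R ∈ G)
    (Ghat : Subgroup (Matrix (Fin 3) (Fin 3) R)ˣ)
    (hGhat : Ghat = Subgroup.closure (↑G ∪
      {u : (Matrix (Fin 3) (Fin 3) R)ˣ | u ∈ UT3 R ∧
        (u : Matrix (Fin 3) (Fin 3) R) 0 1 = 0 ∧
        (u : Matrix (Fin 3) (Fin 3) R) 1 2 = 0})) :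
    SatisfiesTau R Ghat ↔ SatisfiesTau R G := by
  subst hGhat
  exact satisfiesTau_extend_central_general hG (genA1_mem R) (genA2_mem R)
    (fun _ hu ↦ hu.1) (fun _ hu ↦ mem_centralizer_UT3_of_apply_eq_zero hu.1 hu.2.1 hu.2.2)
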